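/- arXiv:2008.03916 — 2 statements merged into one kernel-verified Lean document; each statement's English description precedes it below -/
import Mathlib

section
/- For all natural numbers n ≥ 0 and l ≥ 0, the (2l+1)-st power of the n-th balancing number satisfies the linearization identity B_n^{2l+1} = (1/2^{5l}) · ∑_{s=0}^{l} (-1)^s · C(2l+1, s) · B_{(2(l-s)+1)n}, where the identity is an equality of rational numbers (equivalently, 2^{5l} · B_n^{2l+1} = ∑_{s=0}^{l} (-1)^s · C(2l+1, s) · B_{(2(l-s)+1)n} as integers). -/
/-- The balancing numbers: B₀ = 0, B₁ = 1, Bₙ = 6·Bₙ₋₁ − Bₙ₋₂. -/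
def balancing : ℕ → ℤ
  | 0 => 0
  | 1 => 1
  | n + 2 => 6 * balancing (n + 1) - balancing n

theorem balancing_binet (n : ℕ) : (4 * √2) * (balancing n : ℝ) = (3 + 2 * √2) ^ n - (3 - 2 * √2) ^ n := by
  have h2 : √2 * √2 = (2 : ℝ) := Real.mul_self_sqrt (by norm_num)
  induction n using Nat.twoStepInduction with
  | zero => simp [balancing]
  | one => simp [balancing]; ring
  | more n h0 h1 =>
    have ha : (3 + 2 * √2) ^ 2 = 6 * (3 + 2 * √2) - 1 := by linear_combination 4 * h2
    have hb : (3 - 2 * √2) ^ 2 = 6 * (3 - 2 * √2) - 1 := by linear_combination 4 * h2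
    rw [balancing]
    push_cast
    linear_combination 6 * h1 - h0 - (3 + 2 * √2) ^ n * ha + (3 - 2 * √2) ^ n * hb

theorem sub_pow_odd_of_mul_eq_one (x y : ℝ) (h : x * y = 1) (l : ℕ) :
    (x - y) ^ (2 * l + 1) = ∑ s ∈ Finset.range (l + 1),
      (-1 : ℝ) ^ s * (Nat.choose (2 * l + 1) s : ℝ) *
        (x ^ (2 * (l - s) + 1) - y ^ (2 * (l - s) + 1)) := by
  have e : x - y = -y + x := by ring
  rw [e, add_pow, show 2 * l + 1 + 1 = (l + 1) + (l + 1) by ring, Finset.sum_range_add,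
    ← Finset.sum_range_reflect (fun i => (-y) ^ (l + 1 + i) * _ * _), ← Finset.sum_add_distrib]
  refine Finset.sum_congr rfl fun s hs => ?_
  obtain ⟨k, rfl⟩ : ∃ k, l = s + k := ⟨l - s, by have := Finset.mem_range.1 hs; omega⟩
  have hc : (2 * (s + k) + 1).choose (s + 2 * k + 1) = (2 * (s + k) + 1).choose s :=
    Nat.choose_symm_of_eq_add (by ring)
  rw [show s + k + 1 + (s + k + 1 - 1 - s) = s + 2 * k + 1 by omega,
    show 2 * (s + k) + 1 - (s + 2 * k + 1) = s by omega,
    show 2 * (s + k) + 1 - s = s + (2 * k + 1) by omega,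
    show s + k - s = k by omega, hc]
  have hp : x ^ s * y ^ s = 1 := by rw [← mul_pow, h, one_pow]
  have h3 : (-y) ^ (s + 2 * k + 1) = -((-1) ^ s * y ^ s * y ^ (2 * k + 1)) := by
    rw [add_assoc, pow_add, Odd.neg_pow ⟨k, rfl⟩ y, neg_pow y s]; ring
  rw [h3, neg_pow y s, pow_add x s]
  linear_combination ((-1 : ℝ) ^ s * ((2 * (s + k) + 1).choose s : ℝ) *
    (x ^ (2 * k + 1) - y ^ (2 * k + 1))) * hp

/-- Odd-power linearization of balancing numbers:
`2^(5l) · Bₙ^(2l+1) = ∑_{s=0}^{l} (-1)^s C(2l+1, s) B_{(2(l−s)+1)n}`. -/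
theorem balancing_odd_power_linearization (n l : ℕ) :
    (2 : ℤ) ^ (5 * l) * (balancing n) ^ (2 * l + 1) =
      ∑ s ∈ Finset.range (l + 1),
        (-1 : ℤ) ^ s * (Nat.choose (2 * l + 1) s : ℤ) *
          balancing ((2 * (l - s) + 1) * n) := by
  have h2 : √2 * √2 = (2 : ℝ) := Real.mul_self_sqrt (by norm_num)
  have hD : (4 * √2 : ℝ) ≠ 0 := by positivity
  have key := sub_pow_odd_of_mul_eq_one ((3 + 2 * √2) ^ n) ((3 - 2 * √2) ^ n)
    (by rw [← mul_pow, show (3 + 2 * √2) * (3 - 2 * √2) = (1 : ℝ) by linear_combination -4 * h2,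
      one_pow]) l
  rw [← balancing_binet, mul_pow] at key
  have h5 : (4 * √2 : ℝ) ^ (2 * l + 1) = 4 * √2 * 2 ^ (5 * l) := by
    rw [pow_succ, pow_mul, pow_mul, show (4 * √2 : ℝ) ^ 2 = 2 ^ 5 by linear_combination 16 * h2]
    ring
  rw [h5, mul_assoc] at key
  have : ((2 : ℝ) ^ (5 * l) * (balancing n : ℝ) ^ (2 * l + 1)) =
      ∑ s ∈ Finset.range (l + 1),
        (-1 : ℝ) ^ s * (Nat.choose (2 * l + 1) s : ℝ) *
          (balancing ((2 * (l - s) + 1) * n) : ℝ) := by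
    apply mul_left_cancel₀ hD
    rw [key, Finset.mul_sum]
    refine Finset.sum_congr rfl fun s _ => ?_
    rw [← pow_mul, ← pow_mul, mul_comm n, ← balancing_binet]
    ring
  exact_mod_cast this
end

section
/- For every integer m ≥ 1 and every integer k ≥ 2, the balancing numbers satisfy the three-term recurrence B_{km} − 6·B_m·B_{(k−1)m} + 2·B_{m−1}·B_{(k−1)m} + B_{(k−2)m} = 0; equivalently, B_{km} = (6·B_m − 2·B_{m−1})·B_{(k−1)m} − B_{(k−2)m}. -/
theorem balancing_step (n : ℕ) :
    balancing (n + 2) = 6 * balancing (n + 1) - balancing n := by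
  rw [balancing]

theorem balancing_add (n p : ℕ) :
    balancing (n + p + 1)
      = balancing (n + 1) * balancing (p + 1) - balancing n * balancing p := by
  induction p generalizing n with
  | zero => simp [balancing]
  | succ p ih =>
    have h := ih (n + 1)
    rw [show n + (p + 1) + 1 = n + 1 + p + 1 by ring, h, balancing_step n, balancing_step p]
    ring

theorem balancing_cassini (p : ℕ) :
    balancing (p + 1) ^ 2 - 6 * balancing p * balancing (p + 1) + balancing p ^ 2 = 1 := by
  induction p with
  | zero => simp [balancing]
  | succ p ih =>
    rw [balancing_step p]
    linear_combination ih

/-- Three-term recurrence for equally spaced balancing numbers: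
`B_{km} − 6BₘB_{(k−1)m} + 2Bₘ₋₁B_{(k−1)m} + B_{(k−2)m} = 0` for m ≥ 1, k ≥ 2. -/
theorem balancing_spaced_recurrence (m k : ℕ) (hm : 1 ≤ m) (hk : 2 ≤ k) :
    balancing (k * m) - 6 * balancing m * balancing ((k - 1) * m)
      + 2 * balancing (m - 1) * balancing ((k - 1) * m)
      + balancing ((k - 2) * m) = 0 := by
  obtain ⟨p, rfl⟩ : ∃ p, m = p + 1 := ⟨m - 1, by omega⟩
  obtain ⟨j, rfl⟩ : ∃ j, k = j + 2 := ⟨k - 2, by omega⟩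
  simp only [Nat.add_sub_cancel, show j + 2 - 1 = j + 1 by omega]
  generalize hn : j * (p + 1) = n
  have e1 : (j + 1) * (p + 1) = n + p + 1 := by rw [← hn]; ring
  have e2 : (j + 2) * (p + 1) = (n + p + 1) + p + 1 := by rw [← hn]; ring
  have h3 : balancing (n + p + 1 + 1)
      = balancing (n + 1) * balancing (p + 2) - balancing n * balancing (p + 1) :=
    balancing_add n (p + 1)
  rw [e1, e2, balancing_add (n + p + 1) p, h3, balancing_add n p, balancing_step p]
  linear_combination (-balancing n) * balancing_cassini p
end
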